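/- Let a, c be complex numbers with Re(c − a) > 0 and such that c and c − a are not nonpositive integers or zero. Then Σ_{k=1}^∞ (a)_k / (k (c)_k) = ψ(c) − ψ(c − a), where ψ is the digamma function. -/

import Mathlib

/-- The Pochhammer symbol `(a)_k = a (a+1) ⋯ (a+k-1)`. -/
noncomputable def poch (a : ℂ) (k : ℕ) : ℂ := Polynomial.eval a (ascPochhammer ℂ k)

/-- The digamma function `ψ(z) = Γ'(z)/Γ(z)`. -/
noncomputable def digamma (z : ℂ) : ℂ := deriv Complex.Gamma z / Complex.Gamma z

open Filter Topology

lemma norm_GammaSeq_le {s : ℂ} (hs : 0 < s.re) {n : ℕ} (hn : n ≠ 0) :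
    ‖Complex.GammaSeq s n‖ ≤ Real.Gamma s.re := by
  have hn0 : (0:ℝ) < n := by positivity
  have h1 := Real.BohrMollerup.ge_logGammaSeq (f := Real.log ∘ Real.Gamma) (x := s.re) (n := n)
    Real.convexOn_log_Gamma (by
      intro y hy
      simp only [Function.comp]
      rw [Real.Gamma_add_one hy.ne', Real.log_mul hy.ne' (Real.Gamma_pos_of_pos hy).ne', add_comm])
    hs hn
  simp only [Function.comp, Real.Gamma_one, Real.log_one, zero_add] at h1
  have h2 : Real.GammaSeq s.re n ≤ Real.Gamma s.re := by
    rw [Real.le_log_iff_exp_le (Real.Gamma_pos_of_pos hs)] at h1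
    refine le_trans (le_of_eq ?_) h1
    have hp : ∀ j ∈ Finset.range (n+1), (s.re + (j:ℝ)) ≠ 0 := fun j _ => by positivity
    rw [Real.BohrMollerup.logGammaSeq, Real.exp_sub, Real.exp_add, Real.exp_log (by positivity),
      ← Real.log_prod hp, Real.exp_log (Finset.prod_pos fun j _ => by positivity),
      Real.GammaSeq, Real.rpow_def_of_pos hn0, mul_comm s.re]
  refine le_trans ?_ h2
  rw [Complex.GammaSeq, Real.GammaSeq, norm_div, norm_mul, norm_prod,
    Complex.norm_natCast_cpow_of_pos (Nat.pos_of_ne_zero hn), Complex.norm_natCast]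
  refine div_le_div_of_nonneg_left (by positivity) (Finset.prod_pos fun j _ => by positivity) ?_
  refine Finset.prod_le_prod (fun j _ => by positivity) fun j _ => ?_
  simpa using Complex.re_le_norm (s + j)

lemma add_nat_ne {s : ℂ} (hs : 0 < s.re) (j : ℕ) : s + j ≠ 0 := by
  intro h
  have := congrArg Complex.re h
  simp at this
  have : (0:ℝ) ≤ j := by positivity
  linarith

lemma hasDerivAt_GammaSeq {s : ℂ} (hs : 0 < s.re) {n : ℕ} (hn : n ≠ 0) :
    HasDerivAt (fun z => Complex.GammaSeq z n)
      (Complex.GammaSeq s n * (Complex.log n - ∑ j ∈ Finset.range (n+1), 1 / (s + j))) s := by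
  have hn0 : (n:ℂ) ≠ 0 := by exact_mod_cast hn
  have hP : ∏ j ∈ Finset.range (n+1), (s + (j:ℂ)) ≠ 0 :=
    Finset.prod_ne_zero_iff.2 fun j _ => add_nat_ne hs j
  have hd : HasDerivAt (fun z : ℂ => ∏ j ∈ Finset.range (n+1), (z + (j:ℂ)))
      ((∏ j ∈ Finset.range (n+1), (s + (j:ℂ))) * ∑ j ∈ Finset.range (n+1), 1 / (s + j)) s := by
    have := HasDerivAt.fun_finsetProd (u := Finset.range (n+1)) (f := fun (j:ℕ) (z:ℂ) => z + (j:ℂ))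
      (f' := fun _ => 1) (x := s) (fun j _ => (hasDerivAt_id s).add_const _)
    refine this.congr_deriv ?_
    symm
    rw [Finset.mul_sum]
    refine Finset.sum_congr rfl fun j hj => ?_
    rw [← Finset.mul_prod_erase _ _ hj]
    have := add_nat_ne hs j
    simp
    field_simp
  have h1 : HasDerivAt (fun z : ℂ => (n:ℂ) ^ z * (n.factorial : ℂ))
      ((n:ℂ)^s * Complex.log n * n.factorial) s :=
    (((hasDerivAt_id s).const_cpow (Or.inl hn0)).mul_const _).congr_deriv (by simp)
  have := h1.div hd hP
  refine this.congr_deriv ?_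
  rw [Complex.GammaSeq]
  field_simp

lemma tendsto_deriv_GammaSeq {s : ℂ} (hs : 0 < s.re) :
    Tendsto (fun n : ℕ => deriv (fun z => Complex.GammaSeq z n) s) atTop
      (𝓝 (deriv Complex.Gamma s)) := by
  set r := s.re / 2 with hr
  have hr0 : 0 < r := by positivity
  have hre : ∀ w ∈ Metric.closedBall s r, 0 < w.re := by
    intro w hw
    rw [mem_closedBall_iff_norm] at hw
    have := (Complex.abs_re_le_norm (w - s)).trans hw
    rw [abs_le] at this
    simp at this
    linarith
  have hG : ∀ w : ℂ, 0 < w.re → DifferentiableAt ℂ Complex.Gamma w := fun w hw =>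
    Complex.differentiableAt_Gamma w fun m h => add_nat_ne hw m (by rw [h]; ring)
  have key : ∀ f : ℂ → ℂ, (∀ w ∈ Metric.closedBall s r, DifferentiableAt ℂ f w) →
      deriv f s = (2 * Real.pi * Complex.I : ℂ)⁻¹ * ∮ z in C(s, r), (1 / (z - s) ^ 2) • f z := by
    intro f hf
    rw [DifferentiableOn.deriv_eq_smul_circleIntegral hr0
      (fun w hw => (hf w hw).differentiableWithinAt), smul_eq_mul, inv_mul_cancel_left₀]
    simp [Real.pi_ne_zero]
  rw [key _ fun w hw => hG w (hre w hw)]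
  have e : ∀ᶠ n : ℕ in atTop, (2 * Real.pi * Complex.I : ℂ)⁻¹ *
      (∮ z in C(s, r), (1 / (z - s) ^ 2) • Complex.GammaSeq z n) =
      deriv (fun z => Complex.GammaSeq z n) s := by
    filter_upwards [eventually_ne_atTop 0] with n hn
    rw [key _ fun w hw => (hasDerivAt_GammaSeq (hre w hw) hn).differentiableAt]
  refine Tendsto.congr' e ?_
  refine Tendsto.const_mul _ ?_
  have hcm : ∀ θ : ℝ, circleMap s r θ ∈ Metric.closedBall s r :=
    fun θ => circleMap_mem_closedBall s hr0.le θ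
  have hne : ∀ θ : ℝ, (circleMap s r θ - s) ^ 2 ≠ 0 := fun θ =>
    pow_ne_zero _ (sub_ne_zero.2 (circleMap_ne_center hr0.ne'))
  simp only [circleIntegral]
  refine intervalIntegral.tendsto_integral_filter_of_dominated_convergence
    (fun θ => ‖deriv (circleMap s r) θ‖ * (‖1 / (circleMap s r θ - s) ^ 2‖ *
      Real.Gamma (circleMap s r θ).re)) ?_ ?_ ?_ ?_
  · filter_upwards [eventually_ne_atTop 0] with n hn
    refine Continuous.aestronglyMeasurable ?_
    have : Continuous fun θ => Complex.GammaSeq (circleMap s r θ) n :=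
      continuous_iff_continuousAt.2 fun θ =>
        ContinuousAt.comp (g := fun z => Complex.GammaSeq z n) (f := circleMap s r)
          (hasDerivAt_GammaSeq (hre _ (hcm θ)) hn).continuousAt (continuous_circleMap s r).continuousAt
    simp only [deriv_circleMap, smul_eq_mul]
    refine Continuous.mul (by fun_prop) (Continuous.mul ?_ this)
    exact continuous_const.div (by fun_prop) hne
  · filter_upwards [eventually_ne_atTop 0] with n hn
    refine Eventually.of_forall fun θ _ => ?_
    rw [norm_smul, norm_smul]
    gcongr
    exact norm_GammaSeq_le (hre _ (hcm θ)) hn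
  · refine Continuous.intervalIntegrable ?_ _ _
    have : Continuous fun θ => Real.Gamma (circleMap s r θ).re :=
      continuous_iff_continuousAt.2 fun θ =>
        ContinuousAt.comp (g := Real.Gamma) (f := fun θ => (circleMap s r θ).re)
          (Real.differentiableAt_Gamma fun m h => by
            have := hre _ (hcm θ)
            have : (0:ℝ) ≤ m := by positivity
            linarith).continuousAt (Complex.continuous_re.comp (continuous_circleMap s r)).continuousAt
    simp only [deriv_circleMap]
    refine Continuous.mul (by fun_prop) (Continuous.mul ?_ this)
    exact (continuous_const.div (by fun_prop) hne).norm
  · refine Eventually.of_forall fun θ _ => ?_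
    exact ((Complex.GammaSeq_tendsto_Gamma _).const_smul _).const_smul _

lemma tendsto_digamma {s : ℂ} (hs : 0 < s.re) :
    Tendsto (fun n : ℕ => Complex.log n - ∑ j ∈ Finset.range (n+1), 1 / (s + j)) atTop
      (𝓝 (digamma s)) := by
  have h := (tendsto_deriv_GammaSeq hs).div (Complex.GammaSeq_tendsto_Gamma s)
    (Complex.Gamma_ne_zero_of_re_pos hs)
  refine h.congr' ?_
  filter_upwards [eventually_ne_atTop 0] with n hn
  have hn0 : (n:ℂ) ≠ 0 := by exact_mod_cast hn
  have : Complex.GammaSeq s n ≠ 0 := by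
    rw [Complex.GammaSeq]
    refine div_ne_zero (mul_ne_zero (by simp [hn0]) (by exact_mod_cast n.factorial_ne_zero)) ?_
    exact Finset.prod_ne_zero_iff.2 fun j _ => add_nat_ne hs j
  simp only [Pi.div_apply]
  rw [(hasDerivAt_GammaSeq hs hn).deriv]
  field_simp

lemma poch_eq_prod (a : ℂ) (k : ℕ) : poch a k = ∏ j ∈ Finset.range k, (a + (j:ℂ)) := by
  induction k with
  | zero => simp [poch]
  | succ k ih => rw [Finset.prod_range_succ, ← ih, poch, poch, ascPochhammer_succ_eval]

lemma poch_succ (a : ℂ) (k : ℕ) : poch a (k+1) = poch a k * (a + k) := by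
  rw [poch, poch, ascPochhammer_succ_eval]

lemma poch_succ' (a : ℂ) (k : ℕ) : poch a (k+1) = a * poch (a+1) k := by
  rw [poch_eq_prod, poch_eq_prod, Finset.prod_range_succ', mul_comm]
  simp [add_comm, add_left_comm]

lemma poch_ne_zero {c : ℂ} (hc : ∀ n : ℕ, c ≠ -(n : ℂ)) (k : ℕ) : poch c k ≠ 0 := by
  rw [poch_eq_prod]
  exact Finset.prod_ne_zero_iff.2 fun j _ h => hc j (eq_neg_of_add_eq_zero_left h)

lemma ratio_bound {a c : ℂ} (hc : ∀ n : ℕ, c ≠ -(n : ℂ)) :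
    ∃ C : ℝ, ∀ᶠ k : ℕ in atTop, ‖poch a (k+1) / poch c (k+1)‖ ≤ C * (k:ℝ) ^ (-(c - a).re) := by
  by_cases ha : ∃ m : ℕ, a = -(m:ℂ)
  · obtain ⟨m, rfl⟩ := ha
    refine ⟨0, ?_⟩
    filter_upwards [eventually_ge_atTop m] with k hk
    have : poch (-(m:ℂ)) (k+1) = 0 := by
      rw [poch_eq_prod]
      exact Finset.prod_eq_zero (Finset.mem_range.2 (by omega : m < k+1)) (by simp)
    simp [this]
  · push Not at ha
    have h := ((Complex.GammaSeq_tendsto_Gamma c).div (Complex.GammaSeq_tendsto_Gamma a)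
      (Complex.Gamma_ne_zero ha)).norm
    obtain ⟨C, hC⟩ := h.bddAbove_range
    refine ⟨C, ?_⟩
    filter_upwards [eventually_ne_atTop 0] with k hk
    have hk0 : (k:ℂ) ≠ 0 := by exact_mod_cast hk
    have hC' := hC ⟨k, rfl⟩
    have e : poch a (k+1) / poch c (k+1) =
        (Complex.GammaSeq c k / Complex.GammaSeq a k) * (k:ℂ) ^ (a - c) := by
      rw [Complex.GammaSeq, Complex.GammaSeq, ← poch_eq_prod, ← poch_eq_prod,
        Complex.cpow_sub _ _ hk0]
      have h1 := poch_ne_zero ha (k+1)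
      have h2 := poch_ne_zero hc (k+1)
      have h3 : (k.factorial : ℂ) ≠ 0 := by exact_mod_cast k.factorial_ne_zero
      have h4 : (k:ℂ)^a ≠ 0 := by simp [hk0]
      have h5 : (k:ℂ)^c ≠ 0 := by simp [hk0]
      field_simp
    rw [e, norm_mul, Complex.norm_natCast_cpow_of_pos (Nat.pos_of_ne_zero hk)]
    have : (a - c).re = -(c-a).re := by simp
    rw [this]
    gcongr
    exact hC'

lemma ratio_tendsto {a c : ℂ} (hre : 0 < (c - a).re) (hc : ∀ n : ℕ, c ≠ -(n : ℂ)) :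
    Tendsto (fun k : ℕ => poch a (k+1) / poch c (k+1)) atTop (𝓝 0) := by
  obtain ⟨C, hC⟩ := ratio_bound (a := a) hc
  refine squeeze_zero_norm' hC ?_
  simpa using ((tendsto_rpow_neg_atTop hre).comp tendsto_natCast_atTop_atTop).const_mul C

lemma summable_entry {a c : ℂ} (hre : 0 < (c - a).re) (hc : ∀ n : ℕ, c ≠ -(n : ℂ)) :
    Summable fun k : ℕ => poch a (k + 1) / (((k + 1 : ℕ) : ℂ) * poch c (k + 1)) := by
  obtain ⟨C, hC⟩ := ratio_bound (a := a) hc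
  have hs : Summable fun k : ℕ => C * (k:ℝ) ^ (-(c-a).re - 1) :=
    (Real.summable_nat_rpow.2 (by linarith)).mul_left C
  refine Summable.of_norm_bounded_eventually_nat hs ?_
  filter_upwards [hC, eventually_gt_atTop 0] with k hk hk0
  have hk1 : (0:ℝ) < k := by exact_mod_cast hk0
  have e : poch a (k + 1) / (((k + 1 : ℕ) : ℂ) * poch c (k + 1)) =
    (poch a (k+1) / poch c (k+1)) / ((k+1 : ℕ):ℂ) := by rw [div_div, mul_comm]
  rw [e, norm_div, Complex.norm_natCast, Real.rpow_sub_one hk1.ne', ← mul_div_assoc]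
  refine div_le_div₀ ((norm_nonneg _).trans hk) hk hk1 (by push_cast; linarith)

lemma entry_step {a c : ℂ} (hre : 0 < (c - a).re) (hc : ∀ n : ℕ, c ≠ -(n : ℂ)) :
    ∑' k : ℕ, poch a (k + 1) / (((k + 1 : ℕ) : ℂ) * poch c (k + 1)) =
    (∑' k : ℕ, poch a (k + 1) / (((k + 1 : ℕ) : ℂ) * poch (c+1) (k + 1))) +
      (1 / (c - a) - 1 / c) := by
  have hca : c - a ≠ 0 := by intro h; simp [h] at hre
  have hc0 : c ≠ 0 := by simpa using hc 0
  have hc1 : ∀ n : ℕ, c + 1 ≠ -(n:ℂ) := fun n h => hc (n+1) (by push_cast; linear_combination h)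
  have hre1 : 0 < (c + 1 - a).re := by simp at hre ⊢; linarith
  have s1 := summable_entry hre hc
  have s2 := summable_entry hre1 hc1
  rw [← sub_eq_iff_eq_add', ← s1.tsum_sub s2]
  have ht : Tendsto (fun n : ℕ => (poch a (0+1) / poch c (0+1) - poch a (n+1) / poch c (n+1)) / (c - a))
      atTop (𝓝 (1 / (c - a) - 1 / c)) := by
    have := ((ratio_tendsto hre hc).const_sub (poch a (0+1) / poch c (0+1))).div_const (c - a)
    convert this using 2
    simp [poch]
    field_simp
    ring
  refine tendsto_nhds_unique (s1.sub s2).hasSum.tendsto_sum_nat (ht.congr fun n => ?_)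
  rw [← Finset.sum_range_sub' (fun k => poch a (k+1) / poch c (k+1)), Finset.sum_div]
  refine Finset.sum_congr rfl fun k _ => ?_
  have e1 := poch_succ a (k+1)
  have e2 := poch_succ c (k+1)
  have e3 := poch_succ' c (k+1)
  have n1 := poch_ne_zero hc (k+1)
  have n2 := poch_ne_zero hc1 (k+1)
  have n3 : c + ((k+1:ℕ):ℂ) ≠ 0 := fun h => hc (k+1) (eq_neg_of_add_eq_zero_left h)
  have n4 : ((k+1:ℕ):ℂ) ≠ 0 := by exact_mod_cast k.succ_ne_zero
  have e4 : poch (c+1) (k+1) = poch c (k+1) * (c + ((k+1:ℕ):ℂ)) / c := by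
    rw [eq_div_iff hc0, ← e2, e3, mul_comm]
  rw [e1, e2, e4]
  generalize ((k+1:ℕ):ℂ) = x at *
  field_simp
  ring

lemma digamma_step {s : ℂ} (hs : ∀ n : ℕ, s ≠ -(n : ℂ)) :
    digamma (s + 1) = digamma s + 1 / s := by
  have := Complex.digamma_apply_add_one s hs
  simpa [digamma, Complex.digamma, logDeriv_apply] using this

lemma entry_shift {a : ℂ} (n : ℕ) : ∀ {c : ℂ}, 0 < (c - a).re → (∀ n : ℕ, c ≠ -(n : ℂ)) →
    ∑' k : ℕ, poch a (k + 1) / (((k + 1 : ℕ) : ℂ) * poch c (k + 1)) =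
    (∑' k : ℕ, poch a (k + 1) / (((k + 1 : ℕ) : ℂ) * poch (c+n) (k + 1))) +
      ∑ j ∈ Finset.range n, (1 / (c - a + j) - 1 / (c + j)) := by
  induction n with
  | zero => intro c _ _; simp
  | succ n ih =>
    intro c hre hc
    have hc1 : ∀ m : ℕ, c + n ≠ -(m:ℂ) :=
      fun m h => hc (m+n) (by push_cast; linear_combination h)
    have hre1 : 0 < (c + n - a).re := by
      have : (0:ℝ) ≤ n := by positivity
      simp at hre ⊢; linarith
    rw [ih hre hc, entry_step hre1 hc1, Finset.sum_range_succ]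
    push_cast
    rw [← add_assoc c, show c + (n:ℂ) - a = c - a + n by ring]
    ring

lemma entry_tendsto {a c : ℂ} (hre : 0 < (c - a).re) (hc : 0 < c.re) :
    Tendsto (fun n : ℕ => ∑' k : ℕ, poch a (k + 1) / (((k + 1 : ℕ) : ℂ) * poch (c+n) (k + 1)))
      atTop (𝓝 0) := by
  have hc' : ∀ n : ℕ, c ≠ -(n : ℂ) := fun n h => add_nat_ne hc n (by rw [h]; ring)
  have hle : ∀ n j : ℕ, ‖c + (j:ℂ)‖ ≤ ‖c + (n:ℂ) + (j:ℂ)‖ := by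
    intro n j
    rw [Complex.norm_eq_sqrt_sq_add_sq, Complex.norm_eq_sqrt_sq_add_sq]
    simp
    gcongr
    simp
  have hpos : ∀ j : ℕ, 0 < ‖c + (j:ℂ)‖ := fun j => norm_pos_iff.2 (add_nat_ne hc j)
  have h := tendsto_tsum_of_dominated_convergence (𝓕 := atTop)
    (f := fun n k : ℕ => poch a (k + 1) / (((k + 1 : ℕ) : ℂ) * poch (c+n) (k + 1)))
    (g := fun _ => 0) (summable_entry hre hc').norm ?_ ?_
  · simpa using h
  · intro k
    refine squeeze_zero_norm' (a := fun n : ℕ =>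
      ‖poch a (k+1)‖ / (((k+1:ℕ):ℝ) * ∏ j ∈ Finset.range k, ‖c + (j:ℂ)‖) / n) ?_
      (tendsto_const_div_atTop_nhds_zero_nat _)
    filter_upwards [eventually_gt_atTop 0] with n hn
    have hn0 : (0:ℝ) < n := by exact_mod_cast hn
    have hP : 0 < ∏ j ∈ Finset.range k, ‖c + (j:ℂ)‖ := Finset.prod_pos fun j _ => hpos j
    rw [norm_div, norm_mul, Complex.norm_natCast, poch_succ (c+n), norm_mul, poch_eq_prod (c+n),
      norm_prod, div_div, mul_assoc]
    refine div_le_div_of_nonneg_left (norm_nonneg _) (by positivity) ?_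
    have h1 : (n:ℝ) ≤ ‖c + (n:ℂ) + (k:ℂ)‖ := by
      refine le_trans ?_ (Complex.re_le_norm _)
      have : (0:ℝ) ≤ k := by positivity
      simp
      linarith
    gcongr with j _
    exact hle n j
  · refine Eventually.of_forall fun n k => ?_
    rw [norm_div, norm_div, norm_mul, norm_mul, poch_eq_prod c, poch_eq_prod (c+n), norm_prod,
      norm_prod]
    refine div_le_div_of_nonneg_left (norm_nonneg _) ?_ ?_
    · exact mul_pos (by rw [Complex.norm_natCast]; positivity) (Finset.prod_pos fun j _ => hpos j)
    · gcongr with j _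
      exact hle n j

lemma entry_pos {a c : ℂ} (hre : 0 < (c - a).re) (hc : 0 < c.re) :
    ∑' k : ℕ, poch a (k + 1) / (((k + 1 : ℕ) : ℂ) * poch c (k + 1))
      = digamma c - digamma (c - a) := by
  have hc' : ∀ n : ℕ, c ≠ -(n : ℂ) := fun n h => add_nat_ne hc n (by rw [h]; ring)
  have h1 := (tendsto_digamma hc).sub (tendsto_digamma hre)
  have h2 := ((entry_tendsto hre hc).comp (tendsto_add_atTop_nat 1)).add h1
  rw [zero_add] at h2
  refine tendsto_nhds_unique (tendsto_const_nhds.congr fun n => ?_) h2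
  rw [entry_shift (n+1) hre hc']
  simp only [Function.comp, Finset.sum_sub_distrib]
  ring

lemma entry9_aux (a : ℂ) (N : ℕ) : ∀ c : ℂ, 0 < (c - a).re → (∀ n : ℕ, c ≠ -(n : ℂ)) →
    0 < c.re + N → 
    ∑' k : ℕ, poch a (k + 1) / (((k + 1 : ℕ) : ℂ) * poch c (k + 1))
      = digamma c - digamma (c - a) := by
  induction N with
  | zero => intro c hre _ h; exact entry_pos hre (by simpa using h)
  | succ N ih =>
    intro c hre hc h
    have hc1 : ∀ n : ℕ, c + 1 ≠ -(n:ℂ) := fun n h => hc (n+1) (by push_cast; linear_combination h)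
    have hre1 : 0 < (c + 1 - a).re := by simp at hre ⊢; linarith
    have hca : ∀ n : ℕ, c - a ≠ -(n : ℂ) := fun n h => add_nat_ne hre n (by rw [h]; ring)
    rw [entry_step hre hc, ih (c+1) hre1 hc1 (by push_cast at h; simp; linarith),
      show c + 1 - a = c - a + 1 by ring, digamma_step hc, digamma_step hca]
    ring

/-- Ramanujan's Entry 9: for `Re(c-a) > 0`,
`Σ_{k=1}^∞ (a)_k / (k (c)_k) = ψ(c) - ψ(c-a)`. -/
theorem ramanujan_entry9
    (a c : ℂ)
    (hre : (c - a).re > 0)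
    (hc : ∀ n : ℕ, c ≠ -(n : ℂ))
    (hca : ∀ n : ℕ, c - a ≠ -(n : ℂ)) :
    ∑' k : ℕ, poch a (k + 1) / (((k + 1 : ℕ) : ℂ) * poch c (k + 1))
      = digamma c - digamma (c - a) := by
  obtain ⟨N, hN⟩ := exists_nat_gt (-c.re)
  exact entry9_aux a N c hre hc (by linarith)
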